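/- Let s ∈ ℂ and let x ∈ EuclideanSpace ℝ (Fin 3) with x ≠ 0. Then the Laplacian of the function y ↦ G(s, y) at the point x equals s² · G(s, x); that is, Δ(G(s,·))(x) = s² · G(s, x). -/

import Mathlib

/-- The fundamental solution `G(s, x) = exp(−s‖x‖)/(4π‖x‖)` of the time-harmonic
Maxwell/Helmholtz operator. -/
noncomputable def fundSol (s : ℂ) (x : EuclideanSpace ℝ (Fin 3)) : ℂ :=
  Complex.exp (-s * (‖x‖ : ℂ)) / (4 * Real.pi * (‖x‖ : ℂ))

/-- The Laplacian of a complex-valued function on `EuclideanSpace ℝ (Fin 3)`: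
sum over the (orthonormal) standard basis of the second directional derivatives. -/
noncomputable def laplacian (f : EuclideanSpace ℝ (Fin 3) → ℂ)
    (x : EuclideanSpace ℝ (Fin 3)) : ℂ :=
  ∑ i : Fin 3,
    fderiv ℝ (fun y => fderiv ℝ f y (EuclideanSpace.single i (1 : ℝ))) x
      (EuclideanSpace.single i (1 : ℝ))

/-!
On radial functions of `n` variables the Laplacian acts as `g'' + (n - 1) r⁻¹ g'`. For `n = 3` this
is `r⁻¹ (r g)''`, so the substitution `g = r⁻¹ u` turns `Δ` into `u ↦ u''`. For the fundamental
solution `u` is a multiple of `exp (-s r)`, which satisfies `u'' = s² u`.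
-/

open Topology
open scoped RealInnerProductSpace

section Radial

variable {E F : Type*} [NormedAddCommGroup E] [InnerProductSpace ℝ E]
  [NormedAddCommGroup F] [NormedSpace ℝ F]

theorem hasFDerivAt_norm_of_ne_zero {x : E} (hx : x ≠ 0) :
    HasFDerivAt (fun y : E => ‖y‖) (‖x‖⁻¹ • innerSL ℝ x) x := by
  have hsqrt := (hasStrictFDerivAt_norm_sq x).hasFDerivAt.sqrt (by positivity)
  simp only [Real.sqrt_sq (norm_nonneg _)] at hsqrt
  refine hsqrt.congr_fderiv ?_
  ext v
  simp only [one_div, mul_inv_rev, smul_apply, coe_innerSL_apply, nsmul_eq_mul, Nat.cast_ofNat,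
    smul_eq_mul]
  field_simp

theorem hasFDerivAt_comp_norm {g : ℝ → F} {g' : F} {x : E} (hx : x ≠ 0)
    (hg : HasDerivAt g g' ‖x‖) :
    HasFDerivAt (fun y : E => g ‖y‖) ((innerSL ℝ x).smulRight (‖x‖⁻¹ • g')) x := by
  refine (hg.hasFDerivAt.comp x (hasFDerivAt_norm_of_ne_zero hx)).congr_fderiv ?_
  ext v
  simp [smul_smul, mul_comm]

theorem hasDerivAt_inv_smul {u : ℝ → F} {u' : F} {r : ℝ} (hr : r ≠ 0) (hu : HasDerivAt u u' r) :
    HasDerivAt (fun t => t⁻¹ • u t) (r⁻¹ • (u' - r⁻¹ • u r)) r := by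
  refine ((hasDerivAt_inv hr).smul hu).congr_deriv ?_
  module

theorem fderiv_fderiv_comp_norm_apply {g g' : ℝ → F} {g'' : F} {x : E} (hx : x ≠ 0)
    (hg : ∀ᶠ r in 𝓝 ‖x‖, HasDerivAt g (g' r) r) (hg' : HasDerivAt g' g'' ‖x‖) (v w : E) :
    fderiv ℝ (fun y => fderiv ℝ (fun z => g ‖z‖) y v) x w =
      ⟪v, w⟫ • ‖x‖⁻¹ • g' ‖x‖ +
        (⟪x, v⟫ * ⟪x, w⟫) • (‖x‖ ^ 2)⁻¹ • (g'' - ‖x‖⁻¹ • g' ‖x‖) := by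
  have hfirst : (fun y => fderiv ℝ (fun z => g ‖z‖) y v) =ᶠ[𝓝 x]
      fun y => ⟪v, y⟫ • ‖y‖⁻¹ • g' ‖y‖ := by
    filter_upwards [continuous_norm.continuousAt.eventually hg, isOpen_ne.mem_nhds hx]
      with y hgy hy
    simp [(hasFDerivAt_comp_norm hy hgy).fderiv, real_inner_comm]
  have hquot : HasFDerivAt (fun y : E => ‖y‖⁻¹ • g' ‖y‖) _ x :=
    hasFDerivAt_comp_norm hx (hasDerivAt_inv_smul (norm_ne_zero_iff.mpr hx) hg')
  have hinner : HasFDerivAt (fun y => ⟪v, y⟫) (innerSL ℝ v) x := (innerSL ℝ v).hasFDerivAt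
  rw [hfirst.fderiv_eq, (hinner.fun_smul hquot).fderiv]
  simp only [real_inner_comm, add_apply, smul_apply, ContinuousLinearMap.smulRight_apply,
    coe_innerSL_apply]
  module

theorem sum_fderiv_fderiv_comp_norm {ι : Type*} [Fintype ι] (b : OrthonormalBasis ι ℝ E)
    {g g' : ℝ → F} {g'' : F} {x : E} (hx : x ≠ 0)
    (hg : ∀ᶠ r in 𝓝 ‖x‖, HasDerivAt g (g' r) r) (hg' : HasDerivAt g' g'' ‖x‖) :
    ∑ i, fderiv ℝ (fun y => fderiv ℝ (fun z => g ‖z‖) y (b i)) x (b i) =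
      g'' + (((Fintype.card ι : ℝ) - 1) * ‖x‖⁻¹) • g' ‖x‖ := by
  have hnorm : ∑ i, ⟪b i, b i⟫ = (Fintype.card ι : ℝ) := by simp
  have hparseval : ∑ i, ⟪x, b i⟫ * ⟪x, b i⟫ = ‖x‖ ^ 2 := by
    simpa only [sq] using b.sum_sq_inner_left x
  simp only [fderiv_fderiv_comp_norm_apply hx hg hg']
  rw [Finset.sum_add_distrib, ← Finset.sum_smul, ← Finset.sum_smul, hnorm, hparseval,
    smul_inv_smul₀ (pow_ne_zero 2 (norm_ne_zero_iff.mpr hx))]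
  module

end Radial

theorem laplacian_comp_norm {g g' : ℝ → ℂ} {g'' : ℂ} {x : EuclideanSpace ℝ (Fin 3)} (hx : x ≠ 0)
    (hg : ∀ᶠ r in 𝓝 ‖x‖, HasDerivAt g (g' r) r) (hg' : HasDerivAt g' g'' ‖x‖) :
    laplacian (fun y => g ‖y‖) x = g'' + (2 * ‖x‖⁻¹) • g' ‖x‖ := by
  have hsum := sum_fderiv_fderiv_comp_norm (EuclideanSpace.basisFun (Fin 3) ℝ) hx hg hg'
  have hdim : ((Fintype.card (Fin 3) : ℝ) - 1) = 2 := by norm_num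
  simpa only [laplacian, EuclideanSpace.basisFun_apply, hdim] using hsum

theorem laplacian_inv_norm_smul {u u' : ℝ → ℂ} {u'' : ℂ} {x : EuclideanSpace ℝ (Fin 3)}
    (hx : x ≠ 0) (hu : ∀ᶠ r in 𝓝 ‖x‖, HasDerivAt u (u' r) r) (hu' : HasDerivAt u' u'' ‖x‖) :
    laplacian (fun y => ‖y‖⁻¹ • u ‖y‖) x = ‖x‖⁻¹ • u'' := by
  have hr : ‖x‖ ≠ 0 := norm_ne_zero_iff.mpr hx
  have hg : ∀ᶠ t in 𝓝 ‖x‖,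
      HasDerivAt (fun r => r⁻¹ • u r) (t⁻¹ • (u' t - t⁻¹ • u t)) t := by
    filter_upwards [hu, isOpen_ne.mem_nhds hr] with t hut ht
    exact hasDerivAt_inv_smul ht hut
  have hg' := hasDerivAt_inv_smul hr (hu'.fun_sub hg.self_of_nhds)
  rw [laplacian_comp_norm hx hg hg']
  module

theorem hasDerivAt_const_mul_cexp_mul (c a : ℂ) (r : ℝ) :
    HasDerivAt (fun t : ℝ => c * Complex.exp (a * t)) (a * (c * Complex.exp (a * r))) r := by
  have hexp := ((hasDerivAt_const_mul a).cexp.const_mul c).comp_ofReal (z := r)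
  exact hexp.congr_deriv (by ring)

theorem fundSol_eq_inv_norm_smul (s : ℂ) (x : EuclideanSpace ℝ (Fin 3)) :
    fundSol s x = ‖x‖⁻¹ • ((4 * Real.pi : ℂ)⁻¹ * Complex.exp (-s * ‖x‖)) := by
  rw [fundSol, Complex.real_smul, Complex.ofReal_inv, div_eq_mul_inv, mul_inv]
  ring

/-- Away from the origin, `G(s,·)` is a fundamental solution of
`Δ − s²`: for `x ≠ 0`, `Δ(G(s,·))(x) = s² · G(s,x)`. -/
theorem laplacian_fundSol (s : ℂ) (x : EuclideanSpace ℝ (Fin 3)) (hx : x ≠ 0) :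
    laplacian (fundSol s) x = s ^ 2 * fundSol s x := by
  set u : ℝ → ℂ := fun r => (4 * Real.pi : ℂ)⁻¹ * Complex.exp (-s * r)
  have hu (r : ℝ) : HasDerivAt u (-s * u r) r := hasDerivAt_const_mul_cexp_mul _ _ r
  have hu' : HasDerivAt (fun r => -s * u r) (-s * (-s * u ‖x‖)) ‖x‖ := (hu ‖x‖).const_mul (-s)
  have hG : fundSol s = fun y => ‖y‖⁻¹ • u ‖y‖ := funext (fundSol_eq_inv_norm_smul s)
  calc laplacian (fundSol s) x
      = ‖x‖⁻¹ • (-s * (-s * u ‖x‖)) := by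
        rw [hG, laplacian_inv_norm_smul hx (.of_forall hu) hu']
    _ = s ^ 2 * (‖x‖⁻¹ • u ‖x‖) := by rw [mul_smul_comm]; ring_nf
    _ = s ^ 2 * fundSol s x := by rw [hG]
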